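/- Suppose q ∈ [2,∞), p ∈ (1,q], η ∈ (0,1), and (X,‖·‖_X) is a Banach space satisfying δ_X(ε) ≥ (ηε)^q for every ε ∈ (0,1). Then there exists a constant C = C(η,p,q) ∈ (0,∞) such that every smooth compactly supported f : ℍ(ℝ) → X satisfies (∫₀^∞ (∫_{ℍ(ℝ)} ‖f(hc^t) − f(h)‖_X^p dμ(h))^{q/p} dt/t^{1+q/2})^{1/q} ≤ C (∫_{ℍ(ℝ)} ‖∇_ℍ f(h)‖_{ℓ_p²(X)}^p dμ(h))^{1/p}. -/

import Mathlib

open MeasureTheory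

/-- The real Heisenberg group `ℍ(ℝ)`, identified with `ℝ³`; the Lebesgue measure
(`volume`) is a Haar measure for the Heisenberg group structure. -/
abbrev HR : Type := ℝ × ℝ × ℝ

namespace HR

/-- Right translation by the central element `c^t`: `h ↦ h·c^t`. -/
def vmul (t : ℝ) (h : HR) : HR := (h.1, h.2.1, h.2.2 + t)

/-- The Poisson kernel `P_t(u) = t/(π(t²+u²))` on `ℝ`. -/
noncomputable def Pker (t u : ℝ) : ℝ := t / (Real.pi * (t ^ 2 + u ^ 2))

/-- `Q_t(u) = ∂P_t/∂t(u) = (u²−t²)/(π(t²+u²)²)`. -/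
noncomputable def Qker (t u : ℝ) : ℝ := (u ^ 2 - t ^ 2) / (Real.pi * (t ^ 2 + u ^ 2) ^ 2)

variable {X : Type*} [NormedAddCommGroup X] [NormedSpace ℝ X]

/-- Convolution of a kernel `ψ : ℝ → ℝ` with `g : ℍ(ℝ) → X` along the center:
`(ψ*g)(x,y,z) = ∫_ℝ ψ(u) g(x,y,z−u) du`. -/
noncomputable def conv (ψ : ℝ → ℝ) (g : HR → X) (h : HR) : X :=
  ∫ u : ℝ, ψ u • g (h.1, h.2.1, h.2.2 - u)

/-- The left-invariant horizontal derivative `∂_a f = ∂f/∂x`. -/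
noncomputable def da (f : HR → X) (h : HR) : X := fderiv ℝ f h (1, 0, 0)

/-- The left-invariant horizontal derivative `∂_b f = ∂f/∂y + x·∂f/∂z`. -/
noncomputable def db (f : HR → X) (h : HR) : X :=
  fderiv ℝ f h (0, 1, 0) + h.1 • fderiv ℝ f h (0, 0, 1)

end HR


theorem rpow_mul_add_le {θ x y q : ℝ} (hθ : 0 ≤ θ) (hθ' : θ < 1) (hx : 0 ≤ x) (hy : 0 ≤ y)
    (hq : 1 ≤ q) : (θ * x + y) ^ q ≤ θ * x ^ q + (1 - θ) ^ (1 - q) * y ^ q := by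
  have h1 : 0 < 1 - θ := by linarith
  have h := (convexOn_rpow hq).2 (x := x) (y := y / (1 - θ)) hx
    (by simp only [Set.mem_Ici]; positivity) hθ h1.le (by ring)
  simp only [smul_eq_mul] at h
  have e1 : (1 - θ) * (y / (1 - θ)) = y := by field_simp
  have e2 : (1 - θ) * (y / (1 - θ)) ^ q = (1 - θ) ^ (1 - q) * y ^ q := by
    rw [Real.div_rpow hy h1.le, Real.rpow_sub h1, Real.rpow_one]
    ring
  rwa [e1, e2] at h

theorem rpow_add_le {x y q : ℝ} (hx : 0 ≤ x) (hy : 0 ≤ y) (hq : 1 ≤ q) :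
    (x + y) ^ q ≤ 2 ^ (q - 1) * (x ^ q + y ^ q) := by
  have h := NNReal.rpow_add_le_mul_rpow_add_rpow ⟨x, hx⟩ ⟨y, hy⟩ hq
  exact_mod_cast h

theorem sum_rpow_le_of_le_succ {a b : ℕ → ℝ} {θ q : ℝ} (hθ : 0 ≤ θ) (hθ' : θ < 1) (hq : 1 ≤ q)
    (ha : ∀ k, 0 ≤ a k) (hb : ∀ k, 0 ≤ b k) (h : ∀ k, a k ≤ θ * a (k + 1) + b k) (n : ℕ) :
    (1 - θ) * ∑ k ∈ Finset.range n, a k ^ q ≤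
      a n ^ q + (1 - θ) ^ (1 - q) * ∑ k ∈ Finset.range n, b k ^ q := by
  have h1 : ∑ k ∈ Finset.range n, a k ^ q ≤ θ * ∑ k ∈ Finset.range n, a (k + 1) ^ q +
      (1 - θ) ^ (1 - q) * ∑ k ∈ Finset.range n, b k ^ q := by
    rw [Finset.mul_sum, Finset.mul_sum, ← Finset.sum_add_distrib]
    refine Finset.sum_le_sum fun k _ => ?_
    exact (Real.rpow_le_rpow (ha k) (h k) (by linarith)).trans
      (rpow_mul_add_le hθ hθ' (ha _) (hb _) hq)
  have h2 := Finset.sum_range_succ (fun k => a k ^ q) n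
  rw [Finset.sum_range_succ'] at h2
  have h3 : 0 ≤ a 0 ^ q := Real.rpow_nonneg (ha 0) q
  have h4 : 0 ≤ a n ^ q := Real.rpow_nonneg (ha n) q
  nlinarith

theorem sum_rpow_le_of_succ_le {a b : ℕ → ℝ} {θ q : ℝ} (hθ : 0 ≤ θ) (hθ' : θ < 1) (hq : 1 ≤ q)
    (ha : ∀ k, 0 ≤ a k) (hb : ∀ k, 0 ≤ b k) (h0 : a 0 = 0)
    (h : ∀ k, a (k + 1) ≤ θ * a k + b k) (n : ℕ) :
    (1 - θ) * ∑ k ∈ Finset.range n, a k ^ q ≤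
      (1 - θ) ^ (1 - q) * ∑ k ∈ Finset.range n, b k ^ q := by
  have h1 : ∑ k ∈ Finset.range n, a (k + 1) ^ q ≤ θ * ∑ k ∈ Finset.range n, a k ^ q +
      (1 - θ) ^ (1 - q) * ∑ k ∈ Finset.range n, b k ^ q := by
    rw [Finset.mul_sum, Finset.mul_sum, ← Finset.sum_add_distrib]
    refine Finset.sum_le_sum fun k _ => ?_
    exact (Real.rpow_le_rpow (ha _) (h k) (by linarith)).trans
      (rpow_mul_add_le hθ hθ' (ha _) (hb _) hq)
  have h2 := Finset.sum_range_succ (fun k => a k ^ q) n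
  rw [Finset.sum_range_succ', h0, Real.zero_rpow (by linarith)] at h2
  have h4 : 0 ≤ a n ^ q := Real.rpow_nonneg (ha n) q
  nlinarith

section Dyadic

variable {V : Type*} [AddCommGroup V] [Module ℝ V]

/-- The average `2⁻ᵏ ∑_{j < 2ᵏ} τʲ`. -/
noncomputable def dyadicMean (τ : Module.End ℝ V) : ℕ → Module.End ℝ V
  | 0 => 1
  | k + 1 => (1 / 2 : ℝ) • ((1 + τ ^ 2 ^ k) * dyadicMean τ k)

/-- The difference of two consecutive dyadic averages. -/
noncomputable def dyadicDiff (τ : Module.End ℝ V) (k : ℕ) : Module.End ℝ V :=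
  (1 / 2 : ℝ) • ((1 - τ ^ 2 ^ k) * dyadicMean τ k)

theorem commute_dyadicMean {A τ : Module.End ℝ V} (h : Commute A τ) (k : ℕ) :
    Commute A (dyadicMean τ k) := by
  induction k with
  | zero => exact Commute.one_right A
  | succ k ih =>
    exact (((Commute.one_right A).add_right (h.pow_right _)).mul_right ih).smul_right _

theorem commute_dyadicDiff {A τ : Module.End ℝ V} (h : Commute A τ) (k : ℕ) :
    Commute A (dyadicDiff τ k) :=
  (((Commute.one_right A).sub_right (h.pow_right _)).mul_right
    (commute_dyadicMean h k)).smul_right _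

theorem dyadicDiff_apply (τ : Module.End ℝ V) (k : ℕ) (x : V) :
    dyadicDiff τ k x = (1 / 2 : ℝ) • (dyadicMean τ k x - (τ ^ 2 ^ k) (dyadicMean τ k x)) := by
  simp [dyadicDiff]

theorem dyadicMean_succ_apply (τ : Module.End ℝ V) (k : ℕ) (x : V) :
    dyadicMean τ (k + 1) x =
      (1 / 2 : ℝ) • (dyadicMean τ k x + (τ ^ 2 ^ k) (dyadicMean τ k x)) := by
  simp [dyadicMean]

theorem dyadicMean_succ_apply' (τ : Module.End ℝ V) (k : ℕ) (x : V) :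
    dyadicMean τ (k + 1) x = dyadicMean τ k x - dyadicDiff τ k x := by
  rw [dyadicMean_succ_apply, dyadicDiff_apply]
  module

theorem pow_two_pow_succ_apply (τ : Module.End ℝ V) (k : ℕ) (x : V) :
    (τ ^ 2 ^ (k + 1)) x = (τ ^ 2 ^ k) ((τ ^ 2 ^ k) x) := by
  rw [pow_succ 2 k, pow_mul, pow_two, Module.End.mul_apply]

/-- With `T = τ ^ 2 ^ k`, this is the identity `D_{k+1} = ½ (1 + T)² D_k`, written so that the
differences `(1 - T) D_k` appear. -/
theorem dyadicDiff_eq (τ : Module.End ℝ V) (k : ℕ) (x : V) :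
    dyadicDiff τ k x = (1 / 2 : ℝ) • dyadicDiff τ (k + 1) x +
      ((3 / 4 : ℝ) • (dyadicDiff τ k x - (τ ^ 2 ^ k) (dyadicDiff τ k x)) +
      (1 / 4 : ℝ) • (τ ^ 2 ^ k) (dyadicDiff τ k x - (τ ^ 2 ^ k) (dyadicDiff τ k x))) := by
  simp only [dyadicDiff_apply, dyadicMean_succ_apply, pow_two_pow_succ_apply, map_smul, map_sub,
    map_add]
  module

variable (N : Seminorm ℝ V) {τ : Module.End ℝ V}

theorem seminorm_pow_apply (hτ : ∀ x, N (τ x) = N x) (k : ℕ) (x : V) : N ((τ ^ k) x) = N x := by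
  induction k with
  | zero => simp
  | succ k ih => rw [pow_succ', Module.End.mul_apply, hτ, ih]

theorem sum_dyadicDiff_le {q c : ℝ} (hτ : ∀ x, N (τ x) = N x)
    (hconv : ∀ x y, N x = N y →
      N ((1 / 2 : ℝ) • (x + y)) ^ q + c * N ((1 / 2 : ℝ) • (x - y)) ^ q ≤ N x ^ q)
    (g : V) (n : ℕ) :
    c * ∑ k ∈ Finset.range n, N (dyadicDiff τ k g) ^ q ≤ N g ^ q := by
  have key : N (dyadicMean τ n g) ^ q + c * ∑ k ∈ Finset.range n, N (dyadicDiff τ k g) ^ q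
      ≤ N g ^ q := by
    induction n with
    | zero => simp [dyadicMean]
    | succ n ih =>
      have := hconv (dyadicMean τ n g) ((τ ^ 2 ^ n) (dyadicMean τ n g))
        (seminorm_pow_apply N hτ _ _).symm
      rw [← dyadicMean_succ_apply, ← dyadicDiff_apply] at this
      rw [Finset.sum_range_succ, mul_add]
      linarith
  have : 0 ≤ N (dyadicMean τ n g) ^ q := Real.rpow_nonneg (apply_nonneg N _) q
  linarith

theorem seminorm_dyadicMean_le (hτ : ∀ x, N (τ x) = N x) (k : ℕ) (x : V) :
    N (dyadicMean τ k x) ≤ N x := by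
  induction k with
  | zero => simp [dyadicMean]
  | succ k ih =>
    rw [dyadicMean_succ_apply, map_smul_eq_mul]
    have := map_add_le_add N (dyadicMean τ k x) ((τ ^ 2 ^ k) (dyadicMean τ k x))
    rw [seminorm_pow_apply N hτ] at this
    norm_num
    linarith

end Dyadic

theorem exists_dyadic_sum_le {q c K : ℝ} (hq : 1 ≤ q) (hc : 0 < c) (hK : 0 ≤ K) :
    ∃ C : ℝ, 0 ≤ C ∧ ∀ {V : Type*} [AddCommGroup V] [Module ℝ V] (N : Seminorm ℝ V)
      (τ A B : Module.End ℝ V) (w : ℝ), 0 < w → (∀ x, N (τ x) = N x) → Commute A τ →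
      Commute B τ →
      (∀ x y, N x = N y →
        N ((1 / 2 : ℝ) • (x + y)) ^ q + c * N ((1 / 2 : ℝ) • (x - y)) ^ q ≤ N x ^ q) →
      (∀ k x, N (x - (τ ^ 2 ^ k) x) ≤ w * √2 ^ k * (K * (N (A x) + N (B x)))) →
      ∀ f n, ∑ k ∈ Finset.range n, (N (f - (τ ^ 2 ^ k) f) / (w * √2 ^ k)) ^ q ≤
        C * (N (A f) ^ q + N (B f) ^ q) := by
  obtain ⟨θ, hθd⟩ : ∃ θ : ℝ, θ = (√2)⁻¹ := ⟨_, rfl⟩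
  have h2 : √2 * √2 = 2 := Real.mul_self_sqrt (by norm_num)
  have h2p : 0 < √2 := by positivity
  have hθ0 : 0 ≤ θ := by rw [hθd]; positivity
  have hθ1 : θ < 1 := by
    rw [hθd]; exact inv_lt_one_of_one_lt₀ (by nlinarith)
  have hθh : 1 / 2 * √2 = θ := by
    rw [hθd]; field_simp; linarith
  set Γ := (1 - θ) ^ (1 - q) with hΓ
  have hΓ0 : 0 ≤ Γ := Real.rpow_nonneg (by linarith) _
  set P : ℝ := 2 ^ (q - 1) with hP
  have hP0 : 0 ≤ P := by positivity
  set Ca : ℝ := (K ^ q * P + Γ * (K ^ q * P * c⁻¹)) / (1 - θ) with hCa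
  have h1θ : 0 < 1 - θ := by linarith
  have hKq : 0 ≤ K ^ q := Real.rpow_nonneg hK q
  have hCa0 : 0 ≤ Ca := by positivity
  refine ⟨2 ^ q * P * (Ca + Γ * Ca / (1 - θ)), by positivity, ?_⟩
  intro V _ _ N τ A B w hw hτ hA hB hconv hPoin f n
  have hNn : ∀ x, 0 ≤ N x := apply_nonneg N
  set W : ℕ → ℝ := fun k => w * √2 ^ k with hW
  have hW0 : ∀ k, 0 < W k := fun k => by positivity
  have hWs : ∀ k, W (k + 1) = W k * √2 := fun k => by simp only [hW]; ring
  set G := N (A f) ^ q + N (B f) ^ q with hG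
  have hG0 : 0 ≤ G := add_nonneg (Real.rpow_nonneg (hNn _) _) (Real.rpow_nonneg (hNn _) _)
  set a : ℕ → ℝ := fun k => N (dyadicDiff τ k f) / W k with ha
  set b : ℕ → ℝ := fun k => K * (N (dyadicDiff τ k (A f)) + N (dyadicDiff τ k (B f))) with hb
  set e : ℕ → ℝ := fun k => N (f - dyadicMean τ k f) / W k with he
  have ha0 : ∀ k, 0 ≤ a k := fun k => div_nonneg (hNn _) (hW0 k).le
  have he0 : ∀ k, 0 ≤ e k := fun k => div_nonneg (hNn _) (hW0 k).le
  have hb0 : ∀ k, 0 ≤ b k := fun k => mul_nonneg hK (add_nonneg (hNn _) (hNn _))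
  have hDA : ∀ k, A (dyadicDiff τ k f) = dyadicDiff τ k (A f) := fun k =>
    LinearMap.congr_fun (commute_dyadicDiff hA k).eq f
  have hDB : ∀ k, B (dyadicDiff τ k f) = dyadicDiff τ k (B f) := fun k =>
    LinearMap.congr_fun (commute_dyadicDiff hB k).eq f
  have hMA : ∀ k, A (dyadicMean τ k f) = dyadicMean τ k (A f) := fun k =>
    LinearMap.congr_fun (commute_dyadicMean hA k).eq f
  have hMB : ∀ k, B (dyadicMean τ k f) = dyadicMean τ k (B f) := fun k =>
    LinearMap.congr_fun (commute_dyadicMean hB k).eq f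
  have hsumb : ∑ k ∈ Finset.range n, b k ^ q ≤ K ^ q * P * c⁻¹ * G := by
    have hle : ∀ k, b k ^ q ≤ K ^ q * P *
        (N (dyadicDiff τ k (A f)) ^ q + N (dyadicDiff τ k (B f)) ^ q) := fun k => by
      simp only [hb]
      rw [Real.mul_rpow hK (add_nonneg (hNn _) (hNn _)), mul_assoc]
      exact mul_le_mul_of_nonneg_left (rpow_add_le (hNn _) (hNn _) hq) hKq
    refine (Finset.sum_le_sum fun k _ => hle k).trans ?_
    rw [← Finset.mul_sum, Finset.sum_add_distrib, mul_assoc (K ^ q * P)]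
    refine mul_le_mul_of_nonneg_left ?_ (by positivity)
    rw [inv_mul_eq_div, le_div_iff₀ hc, mul_comm, mul_add]
    exact add_le_add (sum_dyadicDiff_le N hτ hconv _ n) (sum_dyadicDiff_le N hτ hconv _ n)
  have han : a n ^ q ≤ K ^ q * P * G := by
    have h1 : a n ≤ K * (N (A f) + N (B f)) := by
      simp only [ha]
      rw [div_le_iff₀ (hW0 n), dyadicDiff_apply, map_smul_eq_mul]
      have h1 := hPoin n (dyadicMean τ n f)
      rw [hMA, hMB] at h1
      have h2 := seminorm_dyadicMean_le N hτ n (A f)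
      have h3 := seminorm_dyadicMean_le N hτ n (B f)
      have h4 : W n * (K * (N (dyadicMean τ n (A f)) + N (dyadicMean τ n (B f)))) ≤
          W n * (K * (N (A f) + N (B f))) := by
        have := (hW0 n).le
        gcongr
      have h5 := hNn (dyadicMean τ n f - (τ ^ 2 ^ n) (dyadicMean τ n f))
      norm_num
      nlinarith
    refine (Real.rpow_le_rpow (ha0 n) h1 (by linarith)).trans ?_
    rw [Real.mul_rpow hK (add_nonneg (hNn _) (hNn _)), mul_assoc]
    exact mul_le_mul_of_nonneg_left (rpow_add_le (hNn _) (hNn _) hq) hKq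
  have hsuma : ∑ k ∈ Finset.range n, a k ^ q ≤ Ca * G := by
    have h := sum_rpow_le_of_le_succ hθ0 hθ1 hq ha0 hb0 (fun k => ?_) n
    · rw [hCa, div_mul_eq_mul_div, le_div_iff₀ h1θ, mul_comm]
      refine h.trans ?_
      have := mul_le_mul_of_nonneg_left hsumb hΓ0
      linarith
    · simp only [ha, hb]
      rw [div_le_iff₀ (hW0 k), add_mul, hWs, ← hθh]
      have h1 := hPoin k (dyadicDiff τ k f)
      rw [hDA, hDB] at h1
      have h3 : 1 / 2 * √2 * (N (dyadicDiff τ (k + 1) f) / (W k * √2)) * W k =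
          1 / 2 * N (dyadicDiff τ (k + 1) f) := by
        have := (hW0 k).ne'
        field_simp
      rw [h3]
      set d := dyadicDiff τ k f - (τ ^ 2 ^ k) (dyadicDiff τ k f) with hd
      have h4 : N (dyadicDiff τ k f) ≤ 1 / 2 * N (dyadicDiff τ (k + 1) f) + N d := by
        rw [dyadicDiff_eq τ k f, ← hd]
        refine (map_add_le_add N _ _).trans (add_le_add ?_ ((map_add_le_add N _ _).trans ?_))
        · rw [map_smul_eq_mul]; norm_num
        · rw [map_smul_eq_mul, map_smul_eq_mul, seminorm_pow_apply N hτ]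
          norm_num
          linarith
      linarith
  have hsume : ∑ k ∈ Finset.range n, e k ^ q ≤ Γ * Ca / (1 - θ) * G := by
    have h := sum_rpow_le_of_succ_le hθ0 hθ1 hq he0 ha0 (by simp [he, dyadicMean])
      (fun k => ?_) n
    · rw [div_mul_eq_mul_div, le_div_iff₀ h1θ, mul_comm, mul_assoc]
      exact h.trans (mul_le_mul_of_nonneg_left hsuma hΓ0)
    · simp only [ha, he]
      rw [hWs, dyadicMean_succ_apply', hθd, div_le_iff₀ (by positivity)]
      have h1 := map_add_le_add N (f - dyadicMean τ k f) (dyadicDiff τ k f)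
      rw [show f - dyadicMean τ k f + dyadicDiff τ k f = f - (dyadicMean τ k f - dyadicDiff τ k f)
        by abel] at h1
      refine h1.trans ?_
      have := (hW0 k).ne'
      have e1 : ((√2)⁻¹ * (N (f - dyadicMean τ k f) / W k) + N (dyadicDiff τ k f) / W k) *
          (W k * √2) = N (f - dyadicMean τ k f) + √2 * N (dyadicDiff τ k f) := by
        field_simp
      rw [e1]
      nlinarith [hNn (dyadicDiff τ k f)]
  have hfin : ∀ k, (N (f - (τ ^ 2 ^ k) f) / W k) ^ q ≤ 2 ^ q * P * (a k ^ q + e k ^ q) := by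
    intro k
    have h1 : N (f - (τ ^ 2 ^ k) f) / W k ≤ 2 * (a k + e k) := by
      simp only [ha, he]
      rw [← add_div, mul_div_assoc']
      refine div_le_div_of_nonneg_right ?_ (hW0 k).le
      have e1 : f - (τ ^ 2 ^ k) f = (2 : ℝ) • dyadicDiff τ k f +
          ((f - dyadicMean τ k f) + (-1 : ℝ) • (τ ^ 2 ^ k) (f - dyadicMean τ k f)) := by
        rw [dyadicDiff_apply, map_sub]
        module
      rw [e1]
      refine (map_add_le_add N _ _).trans ((add_le_add_right (map_add_le_add N _ _) _).trans ?_)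
      rw [map_smul_eq_mul, map_smul_eq_mul, seminorm_pow_apply N hτ]
      norm_num
      linarith
    refine (Real.rpow_le_rpow (div_nonneg (hNn _) (hW0 k).le) h1 (by linarith)).trans ?_
    rw [Real.mul_rpow (by norm_num) (add_nonneg (ha0 k) (he0 k)), mul_assoc]
    exact mul_le_mul_of_nonneg_left (rpow_add_le (ha0 k) (he0 k) hq) (by positivity)
  refine (Finset.sum_le_sum fun k _ => hfin k).trans ?_
  rw [← Finset.mul_sum, Finset.sum_add_distrib, mul_assoc _ _ G, add_mul]
  exact mul_le_mul_of_nonneg_left (add_le_add hsuma hsume) (by positivity)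

theorem one_add_sq_le_rpow_mean {p : ℝ} (hp : 1 < p) {β : ℝ} (h0 : 0 ≤ β) (h1 : β ≤ 1) :
    1 + p * (p - 1) / 4 * β ^ 2 ≤ ((1 + β) ^ p + (1 - β) ^ p) / 2 := by
  have hd : ∀ x : ℝ, HasDerivAt
      (fun x : ℝ => ((1 + x) ^ p + (1 - x) ^ p) / 2 - p * (p - 1) / 4 * x ^ 2)
      ((1 * p * (1 + x) ^ (p - 1) + (-1) * p * (1 - x) ^ (p - 1)) / 2 -
        p * (p - 1) / 4 * (2 * x)) x := by
    intro x
    have e1 : HasDerivAt (fun x : ℝ => (1 + x) ^ p) (1 * p * (1 + x) ^ (p - 1)) x :=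
      ((hasDerivAt_id x).const_add 1).rpow_const (Or.inr hp.le)
    have e2 : HasDerivAt (fun x : ℝ => (1 - x) ^ p) ((-1) * p * (1 - x) ^ (p - 1)) x :=
      ((hasDerivAt_id x).const_sub 1).rpow_const (Or.inr hp.le)
    have e3 : HasDerivAt (fun x : ℝ => x ^ 2) (2 * x) x := by
      simpa using hasDerivAt_pow 2 x
    exact ((e1.add e2).div_const 2).sub (e3.const_mul _)
  have hmono : MonotoneOn
      (fun x : ℝ => ((1 + x) ^ p + (1 - x) ^ p) / 2 - p * (p - 1) / 4 * x ^ 2)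
      (Set.Icc 0 1) := by
    refine monotoneOn_of_deriv_nonneg (convex_Icc 0 1)
      (fun x _ => (hd x).continuousAt.continuousWithinAt)
      (fun x _ => (hd x).differentiableAt.differentiableWithinAt) fun x hx => ?_
    rw [interior_Icc] at hx
    obtain ⟨hx0, hx1⟩ := hx
    rw [(hd x).deriv]
    have key : (p - 1) * x ≤ (1 + x) ^ (p - 1) - (1 - x) ^ (p - 1) := by
      rcases le_total (p - 1) 1 with h | h
      · have e1 := rpow_one_add_le_one_add_mul_self (s := -x) (by linarith)
          (by linarith : 0 ≤ p - 1) h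
        have e2 := Real.one_le_rpow (by linarith : 1 ≤ 1 + x) (by linarith : 0 ≤ p - 1)
        rw [← sub_eq_add_neg] at e1
        linarith
      · have e1 := one_add_mul_self_le_rpow_one_add (s := x) (by linarith) h
        have e2 := Real.rpow_le_one (by linarith : 0 ≤ 1 - x) (by linarith)
          (by linarith : 0 ≤ p - 1)
        linarith
    nlinarith
  have h := hmono (Set.left_mem_Icc.2 zero_le_one) ⟨h0, h1⟩ h0
  norm_num at h
  linarith

theorem rpow_mean_add_le {p q : ℝ} (hp : 1 < p) (hpq : p ≤ q) (hq : 2 ≤ q) {b : ℝ}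
    (h0 : 0 ≤ b) (h1 : b ≤ 1) :
    ((1 + b) / 2) ^ q + p * (p - 1) / 4 / 2 ^ q * (1 - b) ^ q ≤
      ((1 + b ^ p) / 2) ^ (q / p) := by
  have hm : 0 < (1 + b) / 2 := by linarith
  set m := (1 + b) / 2 with hmd
  set β := (1 - b) / (1 + b) with hβ
  have hβ0 : 0 ≤ β := div_nonneg (by linarith) (by linarith)
  have hβ1 : β ≤ 1 := (div_le_one (by linarith)).2 (by linarith)
  have e1 : (1 : ℝ) = m * (1 + β) := by rw [hmd, hβ]; field_simp; ring
  have e2 : b = m * (1 - β) := by rw [hmd, hβ]; field_simp; ring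
  have e3 : 1 - b = 2 * (m * β) := by rw [hmd, hβ]; field_simp
  have e4 : (1 + b ^ p) / 2 = m ^ p * (((1 + β) ^ p + (1 - β) ^ p) / 2) := by
    have e5 : b ^ p = m ^ p * (1 - β) ^ p := by
      rw [← Real.mul_rpow hm.le (by linarith), ← e2]
    have e6 : 1 = m ^ p * (1 + β) ^ p := by
      rw [← Real.mul_rpow hm.le (by linarith), ← e1, Real.one_rpow]
    rw [e5]; nth_rewrite 1 [e6]; ring
  have hφ := one_add_sq_le_rpow_mean hp hβ0 hβ1
  have hc : 0 ≤ p * (p - 1) / 4 := by nlinarith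
  have hr : 1 ≤ q / p := (one_le_div (by linarith)).2 hpq
  have h5 : 1 + p * (p - 1) / 4 * β ^ q ≤ (((1 + β) ^ p + (1 - β) ^ p) / 2) ^ (q / p) := by
    have h6 : β ^ q ≤ β ^ 2 := by
      rw [← Real.rpow_natCast]
      exact Real.rpow_le_rpow_of_exponent_ge' hβ0 hβ1 (by norm_num) (by exact_mod_cast hq)
    have h7 : 1 + p * (p - 1) / 4 * β ^ q ≤ ((1 + β) ^ p + (1 - β) ^ p) / 2 := by nlinarith
    refine h7.trans ?_
    refine Real.self_le_rpow_of_one_le (le_trans ?_ h7) hr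
    have := mul_nonneg hc (Real.rpow_nonneg hβ0 q)
    linarith
  have hφ0 : 0 ≤ ((1 + β) ^ p + (1 - β) ^ p) / 2 :=
    le_trans (add_nonneg zero_le_one (mul_nonneg hc (sq_nonneg β))) hφ
  rw [e4, e3, Real.mul_rpow (by positivity) hφ0, ← Real.rpow_mul hm.le, mul_div_cancel₀ _ (by linarith),
    Real.mul_rpow (by norm_num) (by positivity), Real.mul_rpow hm.le hβ0]
  have h8 := mul_le_mul_of_nonneg_left h5 (Real.rpow_nonneg hm.le q)
  refine le_trans (le_of_eq ?_) h8
  have : (2 : ℝ) ^ q ≠ 0 := by positivity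
  field_simp

section TwoPoint

variable {X : Type*} [NormedAddCommGroup X] [NormedSpace ℝ X] {η p q : ℝ}

/-- The constant in the two-point inequality for a space with modulus of convexity at least
`(η ε) ^ q`. -/
noncomputable def convexityConst (η p q : ℝ) : ℝ :=
  min (p * (p - 1) / 4 / 2 ^ q / 2 ^ q) (2⁻¹ ^ q / 2 * (η / 3) ^ q)

theorem convexityConst_pos (hη : 0 < η) (hp : 1 < p) : 0 < convexityConst η p q := by
  have : 0 < p - 1 := by linarith
  have : 0 < p := by linarith
  exact lt_min (by positivity) (by positivity)

theorem two_point_of_norm_eq_one (hη : η ∈ Set.Ioo (0 : ℝ) 1) (hq : 2 ≤ q) (hp : 1 < p)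
    (hpq : p ≤ q)
    (hX : ∀ ε ∈ Set.Ioo (0 : ℝ) 1, ∀ x y : X, ‖x‖ = 1 → ‖y‖ = 1 → ε ≤ ‖x - y‖ →
      ‖x + y‖ ≤ 2 * (1 - (η * ε) ^ q)) {u v : X} (hu : ‖u‖ = 1) (hv : ‖v‖ ≤ 1) :
    (‖u + v‖ / 2) ^ q + convexityConst η p q * (‖u - v‖ / 2) ^ q ≤
      ((1 + ‖v‖ ^ p) / 2) ^ (q / p) := by
  obtain ⟨hη0, hη1⟩ := hη
  set c := convexityConst η p q with hc
  have hc0 : 0 < c := convexityConst_pos hη0 hp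
  set c₁ := p * (p - 1) / 4 / 2 ^ q with hc₁
  have hca : c * 2 ^ q ≤ c₁ := by
    rw [← le_div_iff₀ (by positivity)]; exact min_le_left _ _
  have hcb : c ≤ 2⁻¹ ^ q / 2 * (η / 3) ^ q := min_le_right _ _
  set b := ‖v‖ with hb
  have hb0 : 0 ≤ b := norm_nonneg v
  have hq0 : 0 < q := by linarith
  refine le_trans ?_ (rpow_mean_add_le hp hpq hq hb0 hv)
  rw [← hc₁]
  have h1b : 0 ≤ 1 - b := by linarith
  have hsub : ‖u - v‖ ≤ 1 + b := (norm_sub_le u v).trans (by rw [hu])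
  have hadd : ‖u + v‖ ≤ 1 + b := (norm_add_le u v).trans (by rw [hu])
  rcases le_total b (1 / 2) with hbs | hbs
  · refine add_le_add (Real.rpow_le_rpow (by positivity) (by linarith) hq0.le) ?_
    calc c * (‖u - v‖ / 2) ^ q ≤ c * (2 * (1 - b)) ^ q := by
          gcongr; linarith
      _ = c * 2 ^ q * (1 - b) ^ q := by rw [Real.mul_rpow (by norm_num) h1b, mul_assoc]
      _ ≤ c₁ * (1 - b) ^ q := by gcongr
  · have hbp : 0 < b := by linarith
    set v' : X := b⁻¹ • v with hv'
    have hv'1 : ‖v'‖ = 1 := by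
      rw [hv', norm_smul, norm_inv, Real.norm_of_nonneg hb0]; exact inv_mul_cancel₀ hbp.ne'
    have hvv : v = b • v' := by rw [hv', smul_inv_smul₀ hbp.ne']
    set e := ‖u - v'‖ with he
    have he0 : 0 ≤ e := norm_nonneg _
    have he2 : e ≤ 2 := (norm_sub_le u v').trans (by rw [hu, hv'1]; norm_num)
    set δ := (η * (e / 3)) ^ q with hδ
    have hδ0 : 0 ≤ δ := by positivity
    have hδ1 : δ ≤ 1 := Real.rpow_le_one (by positivity) (by nlinarith) hq0.le
    have hmod : ‖u + v'‖ ≤ 2 * (1 - δ) := by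
      rcases he0.eq_or_lt with h | h
      · rw [hδ, ← h]
        simp only [zero_div, mul_zero]
        rw [Real.zero_rpow hq0.ne']
        exact (norm_add_le u v').trans (by rw [hu, hv'1]; norm_num)
      · exact hX (e / 3) ⟨by positivity, by linarith⟩ u v' hu hv'1 (by linarith)
    have hdiff : ‖u - v‖ ≤ e + (1 - b) := by
      have : u - v = (u - v') + (1 - b) • v' := by rw [sub_smul, ← hvv, one_smul]; abel
      rw [this]
      refine (norm_add_le _ _).trans ?_
      rw [norm_smul, hv'1, Real.norm_of_nonneg h1b, mul_one]
    have hsum : ‖u + v‖ / 2 ≤ (1 + b) / 2 - b * δ := by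
      have : u + v = b • (u + v') + (1 - b) • u := by
        rw [smul_add, ← hvv, sub_smul, one_smul]; abel
      rw [this]
      have h3 : ‖b • (u + v') + (1 - b) • u‖ ≤ b * ‖u + v'‖ + (1 - b) := by
        refine (norm_add_le _ _).trans ?_
        rw [norm_smul, norm_smul, hu, Real.norm_of_nonneg h1b, Real.norm_of_nonneg hb0, mul_one]
      nlinarith
    have hpow : (‖u + v‖ / 2) ^ q ≤ ((1 + b) / 2) ^ q - 2⁻¹ ^ q / 2 * δ := by
      set m := (1 + b) / 2 with hm
      have hm0 : 0 < m := by linarith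
      have hx0 : 0 ≤ m - b * δ := le_trans (by positivity) hsum
      calc (‖u + v‖ / 2) ^ q ≤ (m - b * δ) ^ q := Real.rpow_le_rpow (by positivity) hsum hq0.le
        _ = (m - b * δ) ^ (q - 1) * (m - b * δ) := by
            rw [← Real.rpow_add_one' hx0 (by linarith)]; congr 1; ring
        _ ≤ m ^ (q - 1) * (m - b * δ) := by
            gcongr
            · linarith
            · have := mul_nonneg hb0 hδ0
              linarith
        _ = m ^ q - m ^ (q - 1) * (b * δ) := by
            rw [mul_sub, ← Real.rpow_add_one' hm0.le (by linarith)]; congr 2; ring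
        _ ≤ m ^ q - 2⁻¹ ^ q / 2 * δ := by
            have h4 : (2⁻¹ : ℝ) ^ q ≤ m ^ (q - 1) :=
              (Real.rpow_le_rpow_of_exponent_ge (by norm_num) (by norm_num) (by linarith)).trans
                (Real.rpow_le_rpow (by norm_num) (by linarith) (by linarith))
            have h5 : 2⁻¹ ^ q * (1 / 2 * δ) ≤ m ^ (q - 1) * (b * δ) := by gcongr
            linarith
    have hd : c * (‖u - v‖ / 2) ^ q ≤ 2⁻¹ ^ q / 2 * δ + c₁ * (1 - b) ^ q := by
      have h6 : (‖u - v‖ / 2) ^ q ≤ e ^ q + (1 - b) ^ q := by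
        rw [Real.div_rpow (norm_nonneg _) (by norm_num), div_le_iff₀ (by positivity)]
        refine (Real.rpow_le_rpow (norm_nonneg _) hdiff hq0.le).trans
          ((rpow_add_le he0 h1b (by linarith)).trans ?_)
        rw [mul_comm]
        have : (2 : ℝ) ^ (q - 1) ≤ 2 ^ q :=
          Real.rpow_le_rpow_of_exponent_le (by norm_num) (by linarith)
        gcongr
      have h7 : c ≤ c₁ :=
        le_trans (le_mul_of_one_le_right hc0.le
          (Real.one_le_rpow (by norm_num) hq0.le)) hca
      have h8 : δ = (η / 3) ^ q * e ^ q := by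
        rw [hδ, ← Real.mul_rpow (by positivity) he0]; congr 1; ring
      calc c * (‖u - v‖ / 2) ^ q ≤ c * (e ^ q + (1 - b) ^ q) := by gcongr
        _ = c * e ^ q + c * (1 - b) ^ q := mul_add _ _ _
        _ ≤ 2⁻¹ ^ q / 2 * (η / 3) ^ q * e ^ q + c₁ * (1 - b) ^ q := by gcongr
        _ = _ := by rw [h8]; ring
    linarith

theorem two_point_inequality (hη : η ∈ Set.Ioo (0 : ℝ) 1) (hq : 2 ≤ q) (hp : 1 < p)
    (hpq : p ≤ q)
    (hX : ∀ ε ∈ Set.Ioo (0 : ℝ) 1, ∀ x y : X, ‖x‖ = 1 → ‖y‖ = 1 → ε ≤ ‖x - y‖ →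
      ‖x + y‖ ≤ 2 * (1 - (η * ε) ^ q)) (u v : X) :
    (‖u + v‖ / 2) ^ q + convexityConst η p q * (‖u - v‖ / 2) ^ q ≤
      ((‖u‖ ^ p + ‖v‖ ^ p) / 2) ^ (q / p) := by
  wlog h : ‖v‖ ≤ ‖u‖ generalizing u v
  · have := this v u (le_of_not_ge h)
    rwa [add_comm v u, norm_sub_rev v u, add_comm (‖v‖ ^ p)] at this
  rcases (norm_nonneg u).eq_or_lt with hu | hu
  · have hv : ‖v‖ = 0 := le_antisymm (hu ▸ h) (norm_nonneg v)
    rw [norm_eq_zero.1 hu.symm, norm_eq_zero.1 hv]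
    simp only [add_zero, sub_zero, norm_zero, zero_div]
    rw [Real.zero_rpow (by linarith), Real.zero_rpow (by linarith)]
    norm_num
    positivity
  · set r := ‖u‖ with hr
    have key := two_point_of_norm_eq_one (u := r⁻¹ • u) (v := r⁻¹ • v) hη hq hp hpq hX
      (by rw [norm_smul, norm_inv, Real.norm_of_nonneg hu.le]; exact inv_mul_cancel₀ hu.ne')
      (by
        rw [norm_smul, norm_inv, Real.norm_of_nonneg hu.le, inv_mul_eq_div]
        exact (div_le_one hu).2 h)
    rw [← smul_add, ← smul_sub, norm_smul, norm_smul, norm_smul, norm_inv,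
      Real.norm_of_nonneg hu.le] at key
    have hrq : 0 < r ^ q := Real.rpow_pos_of_pos hu q
    have e1 : ∀ x : ℝ, 0 ≤ x → r ^ q * (r⁻¹ * x / 2) ^ q = (x / 2) ^ q := fun x hx => by
      rw [← Real.mul_rpow hu.le (by positivity)]; congr 1; field_simp
    have e2 : r ^ q * ((1 + (r⁻¹ * ‖v‖) ^ p) / 2) ^ (q / p) =
        ((r ^ p + ‖v‖ ^ p) / 2) ^ (q / p) := by
      have : r ^ q = (r ^ p) ^ (q / p) := by
        rw [← Real.rpow_mul hu.le, mul_div_cancel₀ _ (by linarith)]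
      rw [this, ← Real.mul_rpow (by positivity) (by positivity), ← mul_div_assoc, mul_add, mul_one,
        ← Real.mul_rpow hu.le (by positivity), mul_inv_cancel_left₀ hu.ne']
    have h3 := mul_le_mul_of_nonneg_left key hrq.le
    rw [mul_add, mul_left_comm, e1 _ (norm_nonneg _), e1 _ (norm_nonneg _), e2] at h3
    exact h3

end TwoPoint

theorem integral_rpow_add_integral_rpow_le {α : Type*} [MeasurableSpace α] {μ : Measure α}
    {φ ψ χ : α → ℝ} {r : ℝ} (hr : 1 ≤ r) (hφ : Integrable φ μ) (hψ : Integrable ψ μ)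
    (hχ : Integrable χ μ) (hφ0 : ∀ a, 0 ≤ φ a) (hψ0 : ∀ a, 0 ≤ ψ a) (hχ0 : ∀ a, 0 ≤ χ a)
    (h : ∀ a, φ a ^ r + ψ a ^ r ≤ χ a ^ r) :
    (∫ a, φ a ∂μ) ^ r + (∫ a, ψ a ∂μ) ^ r ≤ (∫ a, χ a ∂μ) ^ r := by
  have hr0 : 0 < r := by linarith
  have : Fact (1 ≤ ENNReal.ofReal r) := ⟨by simpa using hr⟩
  have htr : (ENNReal.ofReal r).toReal = r := ENNReal.toReal_ofReal hr0.le
  let L := (WithLp.prodContinuousLinearEquiv (ENNReal.ofReal r) ℝ ℝ ℝ).symm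
  have hnorm : ∀ x y : ℝ, 0 ≤ x → 0 ≤ y → ‖L (x, y)‖ = (x ^ r + y ^ r) ^ (1 / r) := by
    intro x y hx hy
    rw [WithLp.prod_norm_eq_add (by rw [htr]; exact hr0), htr]
    simp [L, abs_of_nonneg hx, abs_of_nonneg hy]
  have h1 : ‖∫ a, L (φ a, ψ a) ∂μ‖ ≤ ∫ a, χ a ∂μ := by
    refine norm_integral_le_of_norm_le hχ (Filter.Eventually.of_forall fun a => ?_)
    rw [hnorm _ _ (hφ0 a) (hψ0 a), one_div]
    rw [Real.rpow_inv_le_iff_of_pos (add_nonneg (Real.rpow_nonneg (hφ0 a) _)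
      (Real.rpow_nonneg (hψ0 a) _)) (hχ0 a) hr0]
    exact h a
  have h2 : ∫ a, L (φ a, ψ a) ∂μ = L (∫ a, φ a ∂μ, ∫ a, ψ a ∂μ) := by
    rw [L.integral_comp_comm, integral_pair hφ hψ]
  have i1 := integral_nonneg (μ := μ) (f := φ) hφ0
  have i2 := integral_nonneg (μ := μ) (f := ψ) hψ0
  rw [h2, hnorm _ _ i1 i2, one_div, Real.rpow_inv_le_iff_of_pos (add_nonneg
    (Real.rpow_nonneg i1 _) (Real.rpow_nonneg i2 _)) (integral_nonneg hχ0) hr0] at h1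
  exact h1

theorem lpNorm_ofReal_rpow {α E : Type*} [MeasurableSpace α] {μ : Measure α}
    [NormedAddCommGroup E] {p : ℝ} (hp : 0 < p) {f : α → E} (hf : AEStronglyMeasurable f μ)
    (q : ℝ) : lpNorm f (ENNReal.ofReal p) μ ^ q = (∫ a, ‖f a‖ ^ p ∂μ) ^ (q / p) := by
  have hI : 0 ≤ ∫ a, ‖f a‖ ^ p ∂μ := integral_nonneg fun a => by positivity
  rw [lpNorm_eq_integral_norm_rpow_toReal (by simpa using hp) ENNReal.ofReal_ne_top hf,
    ENNReal.toReal_ofReal hp.le, ← Real.rpow_mul hI, inv_mul_eq_div]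

theorem lpNorm_two_point {X α : Type*} [NormedAddCommGroup X] [NormedSpace ℝ X]
    [MeasurableSpace α] {μ : Measure α} {η p q : ℝ}
    (hη : η ∈ Set.Ioo (0 : ℝ) 1) (hq : 2 ≤ q) (hp : 1 < p) (hpq : p ≤ q)
    (hX : ∀ ε ∈ Set.Ioo (0 : ℝ) 1, ∀ x y : X, ‖x‖ = 1 → ‖y‖ = 1 → ε ≤ ‖x - y‖ →
      ‖x + y‖ ≤ 2 * (1 - (η * ε) ^ q)) {f g : α → X} (hf : MemLp f (ENNReal.ofReal p) μ)
    (hg : MemLp g (ENNReal.ofReal p) μ)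
    (hfg : lpNorm f (ENNReal.ofReal p) μ = lpNorm g (ENNReal.ofReal p) μ) :
    lpNorm ((1 / 2 : ℝ) • (f + g)) (ENNReal.ofReal p) μ ^ q +
      convexityConst η p q * lpNorm ((1 / 2 : ℝ) • (f - g)) (ENNReal.ofReal p) μ ^ q ≤
      lpNorm f (ENNReal.ofReal p) μ ^ q := by
  have hp0 : 0 < p := by linarith
  set c := convexityConst η p q with hc
  have hc0 : 0 < c := convexityConst_pos hη.1 hp
  have hint : ∀ {F : α → X}, MemLp F (ENNReal.ofReal p) μ →
      Integrable (fun a => ‖F a‖ ^ p) μ := fun hF => by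
    simpa [ENNReal.toReal_ofReal hp0.le] using hF.integrable_norm_rpow
      (by simpa using hp0) ENNReal.ofReal_ne_top
  have hs := (hf.add hg).const_smul (1 / 2 : ℝ)
  have hd := (hf.sub hg).const_smul (1 / 2 : ℝ)
  have hI : ∫ a, ‖g a‖ ^ p ∂μ = ∫ a, ‖f a‖ ^ p ∂μ := by
    have h1 := lpNorm_ofReal_rpow hp0 hf.1 p
    have h2 := lpNorm_ofReal_rpow hp0 hg.1 p
    rw [div_self hp0.ne', Real.rpow_one] at h1 h2
    rw [← h1, ← h2, hfg]
  have hcp : (c ^ (p / q)) ^ (q / p) = c := by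
    rw [← Real.rpow_mul hc0.le, div_mul_div_cancel₀ (by linarith : q ≠ 0), div_self hp0.ne',
      Real.rpow_one]
  have hn : ∀ x : X, ‖(1 / 2 : ℝ) • x‖ = ‖x‖ / 2 := fun x => by
    rw [norm_smul]; norm_num; ring
  have key := integral_rpow_add_integral_rpow_le (r := q / p) ((one_le_div hp0).2 hpq)
    (hint hs) ((hint hd).const_mul (c ^ (p / q)))
    (((hint hf).add (hint hg)).div_const 2)
    (fun a => by positivity) (fun a => by positivity)
    (fun a => by simp only [Pi.add_apply]; positivity) (fun a => by
      rw [Real.mul_rpow (by positivity) (by positivity), hcp, ← Real.rpow_mul (norm_nonneg _),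
        ← Real.rpow_mul (norm_nonneg _), mul_div_cancel₀ _ hp0.ne']
      simp only [Pi.smul_apply, Pi.add_apply, Pi.sub_apply, hn]
      exact two_point_inequality hη hq hp hpq hX (f a) (g a))
  rw [integral_const_mul, Real.mul_rpow (by positivity)
    (integral_nonneg fun a => by positivity), hcp, integral_div] at key
  simp only [Pi.add_apply (f := fun a => ‖f a‖ ^ p)] at key
  rw [integral_add (hint hf) (hint hg), hI, add_self_div_two] at key
  rw [lpNorm_ofReal_rpow hp0 hs.1, lpNorm_ofReal_rpow hp0 hd.1, lpNorm_ofReal_rpow hp0 hf.1]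
  exact key

theorem lintegral_Ioi_le_of_dyadic_sum_le {F : ℝ → ENNReal} {R : ENNReal}
    (h : ∀ s : ℝ, 0 < s → ∀ n : ℕ,
      ∑ k ∈ Finset.range n, ENNReal.ofReal (2 ^ k) * F (2 ^ k * s) ≤ ENNReal.ofReal (1 / s) * R) :
    ∫⁻ t in Set.Ioi (0 : ℝ), F t ≤ R := by
  have hscale : ∀ (ε : ℝ) (k : ℕ), ∫⁻ t in Set.Ioc (2 ^ k * ε) (2 ^ (k + 1) * ε), F t =
      ∫⁻ s in Set.Ioc ε (2 * ε), ENNReal.ofReal (2 ^ k) * F (2 ^ k * s) := by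
    intro ε k
    have h2 : (0 : ℝ) < 2 ^ k := by positivity
    have := lintegral_image_eq_lintegral_abs_deriv_mul (s := Set.Ioc ε (2 * ε))
      (f := fun s => 2 ^ k * s) (f' := fun _ => 2 ^ k) measurableSet_Ioc
      (fun x _ => by simpa using ((hasDerivAt_id x).const_mul ((2 : ℝ) ^ k)).hasDerivWithinAt)
      (fun x _ y _ hxy => mul_left_cancel₀ h2.ne' hxy) F
    rw [Set.image_mul_left_Ioc h2, abs_of_pos h2] at this
    rw [← this]
    congr 3
    ring
  have hsplit : ∀ (ε : ℝ), 0 < ε → ∀ n : ℕ, ∫⁻ t in Set.Ioc ε (2 ^ n * ε), F t ≤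
      ∫⁻ s in Set.Ioc ε (2 * ε), ∑ k ∈ Finset.range n, ENNReal.ofReal (2 ^ k) * F (2 ^ k * s) := by
    intro ε hε n
    induction n with
    | zero => simp
    | succ n ih =>
      have h1 : (1 : ℝ) ≤ 2 ^ n := one_le_pow₀ (by norm_num)
      have hu : Set.Ioc ε (2 ^ (n + 1) * ε) =
          Set.Ioc ε (2 ^ n * ε) ∪ Set.Ioc (2 ^ n * ε) (2 ^ (n + 1) * ε) := by
        rw [Set.Ioc_union_Ioc_eq_Ioc (by nlinarith) (by rw [pow_succ]; nlinarith)]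
      rw [hu]
      refine (lintegral_union_le _ _ _).trans ?_
      simp only [Finset.sum_range_succ]
      rw [hscale]
      exact (add_le_add_left ih _).trans (le_lintegral_add _ _)
  have hbound : ∀ (ε : ℝ), 0 < ε → ∀ n : ℕ, ∫⁻ t in Set.Ioc ε (2 ^ n * ε), F t ≤ R := by
    intro ε hε n
    refine (hsplit ε hε n).trans ?_
    calc _ ≤ ∫⁻ s in Set.Ioc ε (2 * ε), ENNReal.ofReal (1 / ε) * R := by
          refine setLIntegral_mono' measurableSet_Ioc fun s hs => (h s (hε.trans hs.1) n).trans ?_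
          gcongr
          exact hs.1.le
      _ = R := by
          rw [setLIntegral_const, Real.volume_Ioc, mul_right_comm,
            ← ENNReal.ofReal_mul (by positivity)]
          have : 1 / ε * (2 * ε - ε) = 1 := by field_simp; ring
          rw [this, ENNReal.ofReal_one, one_mul]
  have hcover : Set.Ioi (0 : ℝ) = ⋃ n : ℕ, Set.Ioc (2 ^ n)⁻¹ (2 ^ n) := by
    ext x
    simp only [Set.mem_Ioi, Set.mem_iUnion, Set.mem_Ioc]
    constructor
    · intro hx
      obtain ⟨n, hn⟩ := pow_unbounded_of_one_lt (max x x⁻¹) (by norm_num : (1 : ℝ) < 2)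
      exact ⟨n, inv_lt_of_inv_lt₀ hx ((le_max_right _ _).trans_lt hn),
        ((le_max_left _ _).trans_lt hn).le⟩
    · rintro ⟨n, hn, -⟩
      exact lt_trans (by positivity) hn
  rw [hcover, setLIntegral_iUnion_of_directed]
  · refine iSup_le fun n => ?_
    have := hbound ((2 ^ n)⁻¹) (by positivity) (2 * n)
    have e : (2 : ℝ) ^ (2 * n) * (2 ^ n)⁻¹ = 2 ^ n := by
      rw [two_mul, pow_add]; field_simp
    rwa [e] at this
  · refine Monotone.directed_le fun m n hmn => Set.Ioc_subset_Ioc ?_ ?_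
    · gcongr; norm_num
    · gcongr; norm_num

theorem eLpNorm_flow_sub_le {X α : Type*} [NormedAddCommGroup X] [NormedSpace ℝ X]
    [CompleteSpace X] [MeasurableSpace α] [TopologicalSpace α] [SecondCountableTopology α]
    [OpensMeasurableSpace α] {μ : Measure α} [SFinite μ] {φ : ℝ → α → α}
    (hφ : Continuous (Function.uncurry φ)) (hφ0 : ∀ h, φ 0 h = h)
    (hφm : ∀ r, MeasurePreserving (φ r) μ μ) {f g : α → X} (hg : Continuous g)
    (hd : ∀ h r, HasDerivAt (fun r => f (φ r h)) (g (φ r h)) r) {p : ℝ} (hp : 1 ≤ p) {s : ℝ}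
    (hs : 0 ≤ s) :
    eLpNorm (fun h => f (φ s h) - f h) (ENNReal.ofReal p) μ ≤
      ENNReal.ofReal s * eLpNorm g (ENNReal.ofReal p) μ := by
  have hp0 : 0 < p := by linarith
  have hpne : ENNReal.ofReal p ≠ 0 := by simpa using hp0
  have htr : (ENNReal.ofReal p).toReal = p := ENNReal.toReal_ofReal hp0.le
  have hcont : Continuous (fun z : ℝ × α => g (φ z.1 z.2)) := hg.comp hφ
  have hpt : ∀ h, ‖f (φ s h) - f h‖ₑ ^ p ≤
      ENNReal.ofReal s ^ (p - 1) * ∫⁻ r in Set.Ioc 0 s, ‖g (φ r h)‖ₑ ^ p := by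
    intro h
    have hc : Continuous fun r => g (φ r h) := hcont.comp (by fun_prop : Continuous fun r => (r, h))
    have e1 : f (φ s h) - f h = ∫ r in Set.Ioc 0 s, g (φ r h) := by
      rw [← intervalIntegral.integral_of_le hs,
        intervalIntegral.integral_eq_sub_of_hasDerivAt (fun r _ => hd h r)
          (hc.intervalIntegrable 0 s), hφ0]
    have e2 : ‖f (φ s h) - f h‖ₑ ≤ eLpNorm (fun r => g (φ r h)) 1
        (volume.restrict (Set.Ioc 0 s)) := by
      rw [e1, eLpNorm_one_eq_lintegral_enorm]
      exact enorm_integral_le_lintegral_enorm _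
    have e3 := e2.trans (eLpNorm_le_eLpNorm_mul_rpow_measure_univ (q := ENNReal.ofReal p)
      (by simpa using hp) hc.aestronglyMeasurable)
    rw [eLpNorm_eq_lintegral_rpow_enorm_toReal hpne ENNReal.ofReal_ne_top, htr,
      Measure.restrict_apply_univ, Real.volume_Ioc, sub_zero, ENNReal.toReal_one] at e3
    refine (ENNReal.rpow_le_rpow e3 hp0.le).trans (le_of_eq ?_)
    rw [ENNReal.mul_rpow_of_nonneg _ _ hp0.le, ← ENNReal.rpow_mul, ← ENNReal.rpow_mul,
      one_div_mul_cancel hp0.ne', ENNReal.rpow_one, mul_comm]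
    congr 2
    field_simp
  rw [eLpNorm_eq_lintegral_rpow_enorm_toReal hpne ENNReal.ofReal_ne_top,
    eLpNorm_eq_lintegral_rpow_enorm_toReal hpne ENNReal.ofReal_ne_top, htr, one_div,
    ENNReal.rpow_inv_le_iff hp0, ENNReal.mul_rpow_of_nonneg _ _ hp0.le, ENNReal.rpow_inv_rpow hp0.ne']
  have hmeas : AEMeasurable (Function.uncurry fun h r => ‖g (φ r h)‖ₑ ^ p)
      (μ.prod (volume.restrict (Set.Ioc 0 s))) :=
    ((hcont.comp continuous_swap).enorm.measurable.pow_const p).aemeasurable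
  calc ∫⁻ h, ‖f (φ s h) - f h‖ₑ ^ p ∂μ
      ≤ ∫⁻ h, ENNReal.ofReal s ^ (p - 1) * (∫⁻ r in Set.Ioc 0 s, ‖g (φ r h)‖ₑ ^ p) ∂μ :=
        lintegral_mono hpt
    _ = ENNReal.ofReal s ^ (p - 1) * ∫⁻ h, (∫⁻ r in Set.Ioc 0 s, ‖g (φ r h)‖ₑ ^ p) ∂μ := by
        rw [lintegral_const_mul' _ _
          (ENNReal.rpow_ne_top_of_nonneg (by linarith) ENNReal.ofReal_ne_top)]
    _ = ENNReal.ofReal s ^ (p - 1) * ∫⁻ r in Set.Ioc 0 s, (∫⁻ h, ‖g (φ r h)‖ₑ ^ p ∂μ) := by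
        rw [lintegral_lintegral_swap hmeas]
    _ = ENNReal.ofReal s ^ (p - 1) * ∫⁻ _ in Set.Ioc 0 s, (∫⁻ h, ‖g h‖ₑ ^ p ∂μ) := by
        congr 2
        ext r
        exact (hφm r).lintegral_comp (hg.enorm.measurable.pow_const p)
    _ = ENNReal.ofReal s ^ p * ∫⁻ h, ‖g h‖ₑ ^ p ∂μ := by
        rw [setLIntegral_const, Real.volume_Ioc, sub_zero, mul_left_comm, mul_comm]
        congr 1
        rcases hs.eq_or_lt with rfl | hs
        · simp [hp0]
        · nth_rewrite 2 [← ENNReal.rpow_one (ENNReal.ofReal s)]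
          rw [← ENNReal.rpow_add _ _ (by simpa using hs) ENNReal.ofReal_ne_top]
          congr 1
          ring

theorem lpNorm_comp_measurePreserving {α E : Type*} [MeasurableSpace α] [NormedAddCommGroup E]
    {μ : Measure α} {F : α → E} {p : ENNReal} (hF : MemLp F p μ) {φ : α → α}
    (hφ : MeasurePreserving φ μ μ) : lpNorm (F ∘ φ) p μ = lpNorm F p μ := by
  rw [← toReal_eLpNorm (hF.1.comp_measurePreserving hφ), ← toReal_eLpNorm hF.1,
    eLpNorm_comp_measurePreserving hF.1 hφ]

namespace HR

/-- Right translation by the horizontal element `(r, 0, 0)`. -/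
def amul (r : ℝ) (h : HR) : HR := (h.1 + r, h.2.1, h.2.2)

/-- Right translation by the horizontal element `(0, r, 0)`. -/
def bmul (r : ℝ) (h : HR) : HR := (h.1, h.2.1 + r, h.2.2 + h.1 * r)

theorem measurePreserving_amul (r : ℝ) : MeasurePreserving (amul r) volume volume :=
  (measurePreserving_add_right (volume : Measure ℝ) r).prod
    (MeasurePreserving.id (volume : Measure (ℝ × ℝ)))

theorem measurePreserving_bmul (r : ℝ) : MeasurePreserving (bmul r) volume volume :=
  (MeasurePreserving.id (volume : Measure ℝ)).skew_product
    (g := fun x (w : ℝ × ℝ) => w + (r, x * r)) (by fun_prop)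
    (Filter.Eventually.of_forall fun x => map_add_right_eq_self volume (r, x * r))

theorem vmul_eq_add (t : ℝ) (h : HR) : vmul t h = h + (0, 0, t) := by
  simp [vmul, Prod.ext_iff]

theorem measurePreserving_vmul (t : ℝ) : MeasurePreserving (vmul t) volume volume :=
  (MeasurePreserving.id (volume : Measure ℝ)).prod
    ((MeasurePreserving.id (volume : Measure ℝ)).prod
      (measurePreserving_add_right (volume : Measure ℝ) t))

theorem vmul_amul_bmul (s : ℝ) (h : HR) :
    vmul (s * s) (amul s (bmul s h)) = bmul s (amul s h) := by
  simp only [vmul, amul, bmul, Prod.mk.injEq, true_and]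
  ring

theorem vmul_vmul (s t : ℝ) (h : HR) : vmul s (vmul t h) = vmul (t + s) h := by
  simp [vmul, add_assoc]

variable {X : Type*} [NormedAddCommGroup X] [NormedSpace ℝ X]

theorem hasDerivAt_amul {f : HR → X} (hf : Differentiable ℝ f) (h : HR) (r : ℝ) :
    HasDerivAt (fun r => f (amul r h)) (da f (amul r h)) r := by
  have h1 : HasDerivAt (fun r => amul r h) ((1, 0, 0) : HR) r :=
    ((hasDerivAt_id r).const_add h.1).prodMk
      ((hasDerivAt_const r h.2.1).prodMk (hasDerivAt_const r h.2.2))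
  exact (hf (amul r h)).hasFDerivAt.comp_hasDerivAt r h1

theorem hasDerivAt_bmul {f : HR → X} (hf : Differentiable ℝ f) (h : HR) (r : ℝ) :
    HasDerivAt (fun r => f (bmul r h)) (db f (bmul r h)) r := by
  have h1 : HasDerivAt (fun r => bmul r h) ((0, 1, h.1) : HR) r := by
    have h2 := ((hasDerivAt_id r).const_mul h.1).const_add h.2.2
    rw [mul_one] at h2
    exact (hasDerivAt_const r h.1).prodMk (((hasDerivAt_id r).const_add h.2.1).prodMk h2)
  have h3 := (hf (bmul r h)).hasFDerivAt.comp_hasDerivAt r h1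
  have h4 : ((0, 1, h.1) : HR) = (0, 1, 0) + h.1 • (0, 0, 1) := by simp
  rw [h4, map_add, map_smul] at h3
  exact h3

variable (X) in
/-- The space of smooth compactly supported functions on the Heisenberg group. -/
def testSpace : Submodule ℝ (HR → X) where
  carrier := {f | ContDiff ℝ (⊤ : ℕ∞) f ∧ HasCompactSupport f}
  add_mem' hf hg := ⟨hf.1.add hg.1, hf.2.add hg.2⟩
  zero_mem' := ⟨contDiff_const, HasCompactSupport.zero⟩
  smul_mem' c _ hf := ⟨hf.1.const_smul c, hf.2.smul_left (f := fun _ => c)⟩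

theorem testSpace_differentiable (f : testSpace X) : Differentiable ℝ (f : HR → X) :=
  f.2.1.differentiable (by simp)

theorem testSpace_memLp (f : testSpace X) (p : ENNReal) : MemLp (f : HR → X) p volume :=
  f.2.1.continuous.memLp_of_hasCompactSupport f.2.2

theorem contDiff_fderiv_apply {f : HR → X} (hf : ContDiff ℝ (⊤ : ℕ∞) f) (v : HR) :
    ContDiff ℝ (⊤ : ℕ∞) fun h => fderiv ℝ f h v :=
  (hf.fderiv_right (by simp)).clm_apply contDiff_const

variable (X) in
/-- `∂_a` as an operator on test functions. -/
noncomputable def daEnd : Module.End ℝ (testSpace X) where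
  toFun f := ⟨da f, contDiff_fderiv_apply f.2.1 _, f.2.2.fderiv_apply ℝ _⟩
  map_add' f g := Subtype.ext <| funext fun h => by
    simp only [da, Submodule.coe_add, Pi.add_apply]
    rw [fderiv_add (testSpace_differentiable f h) (testSpace_differentiable g h)]
    rfl
  map_smul' c f := Subtype.ext <| funext fun h => by
    simp only [da, Submodule.coe_smul, Pi.smul_apply, RingHom.id_apply]
    rw [fderiv_const_smul (testSpace_differentiable f h)]
    rfl

variable (X) in
/-- `∂_b` as an operator on test functions. -/
noncomputable def dbEnd : Module.End ℝ (testSpace X) where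
  toFun f := ⟨db f, (contDiff_fderiv_apply f.2.1 _).add
      (contDiff_fst.smul (contDiff_fderiv_apply f.2.1 _)),
    (f.2.2.fderiv_apply ℝ _).add ((f.2.2.fderiv_apply ℝ _).smul_left (f := fun h : HR => h.1))⟩
  map_add' f g := Subtype.ext <| funext fun h => by
    simp only [db, Submodule.coe_add, Pi.add_apply]
    rw [fderiv_add (testSpace_differentiable f h) (testSpace_differentiable g h)]
    simp only [add_apply, smul_add]
    abel
  map_smul' c f := Subtype.ext <| funext fun h => by
    simp only [db, Submodule.coe_smul, Pi.smul_apply, RingHom.id_apply]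
    rw [fderiv_const_smul (testSpace_differentiable f h)]
    simp only [smul_apply, smul_add]
    rw [smul_comm]

variable (X) in
/-- Central translation as an operator on test functions. -/
def vmulEnd (t : ℝ) : Module.End ℝ (testSpace X) where
  toFun f := ⟨fun h => (f : HR → X) (vmul t h), by
      simp only [vmul_eq_add]
      exact ⟨f.2.1.comp (contDiff_id.add contDiff_const),
        f.2.2.comp_homeomorph (Homeomorph.addRight ((0, 0, t) : HR))⟩⟩
  map_add' _ _ := rfl
  map_smul' _ _ := rfl

theorem vmulEnd_pow (s : ℝ) (n : ℕ) : vmulEnd X s ^ n = vmulEnd X (n * s) := by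
  induction n with
  | zero =>
    refine LinearMap.ext fun f => Subtype.ext <| funext fun h => ?_
    simp [vmulEnd, vmul]
  | succ n ih =>
    rw [pow_succ', ih]
    refine LinearMap.ext fun f => Subtype.ext <| funext fun h => ?_
    change (f : HR → X) (vmul (n * s) (vmul s h)) = (f : HR → X) (vmul ((n + 1 : ℕ) * s) h)
    have e : s + n * s = ((n + 1 : ℕ) : ℝ) * s := by push_cast; ring
    rw [vmul_vmul, e]

theorem fderiv_comp_vmul (f : HR → X) (t : ℝ) (h : HR) :
    fderiv ℝ (fun h => f (vmul t h)) h = fderiv ℝ f (vmul t h) := by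
  simp only [vmul_eq_add]
  exact fderiv_comp_add_right _

theorem commute_daEnd (t : ℝ) : Commute (daEnd X) (vmulEnd X t) := by
  refine LinearMap.ext fun f => Subtype.ext <| funext fun h => ?_
  change da (fun h => (f : HR → X) (vmul t h)) h = da f (vmul t h)
  simp only [da, fderiv_comp_vmul]

theorem commute_dbEnd (t : ℝ) : Commute (dbEnd X) (vmulEnd X t) := by
  refine LinearMap.ext fun f => Subtype.ext <| funext fun h => ?_
  change db (fun h => (f : HR → X) (vmul t h)) h = db f (vmul t h)
  simp only [db, fderiv_comp_vmul]
  rfl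

variable (X) in
/-- The `L_p` seminorm on test functions. -/
noncomputable def lpSeminorm (p : ENNReal) (hp : 1 ≤ p) : Seminorm ℝ (testSpace X) :=
  Seminorm.of (fun f => lpNorm (f : HR → X) p volume)
    (fun f _ => lpNorm_add_le (testSpace_memLp f p) hp)
    (fun c f => by
      simp only [Submodule.coe_smul]
      rw [lpNorm_const_smul, coe_nnnorm])

theorem lpNorm_amul_sub_le [CompleteSpace X] {p : ℝ} (hp : 1 ≤ p) (f : testSpace X) {s : ℝ}
    (hs : 0 ≤ s) :
    lpNorm (fun h => (f : HR → X) (amul s h) - (f : HR → X) h) (ENNReal.ofReal p) volume ≤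
      s * lpNorm (da (f : HR → X)) (ENNReal.ofReal p) volume := by
  have hc : Continuous (da (f : HR → X)) := (daEnd X f).2.1.continuous
  have hd : MemLp (da (f : HR → X)) (ENNReal.ofReal p) volume := testSpace_memLp (daEnd X f) _
  have hcf := f.2.1.continuous
  have h1 := eLpNorm_flow_sub_le (μ := (volume : Measure HR)) (φ := amul) (f := f) (g := da (f : HR → X))
    (by unfold amul Function.uncurry; fun_prop) (fun h => by simp [amul]) measurePreserving_amul hc
    (fun h r => hasDerivAt_amul (testSpace_differentiable f) h r) hp hs
  have h2 := ENNReal.toReal_mono (ENNReal.mul_ne_top ENNReal.ofReal_ne_top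
    hd.eLpNorm_ne_top) h1
  rw [ENNReal.toReal_mul, ENNReal.toReal_ofReal hs, toReal_eLpNorm hc.aestronglyMeasurable,
    toReal_eLpNorm] at h2
  · exact h2
  · refine Continuous.aestronglyMeasurable ?_
    unfold amul
    fun_prop

theorem lpNorm_bmul_sub_le [CompleteSpace X] {p : ℝ} (hp : 1 ≤ p) (f : testSpace X) {s : ℝ}
    (hs : 0 ≤ s) :
    lpNorm (fun h => (f : HR → X) (bmul s h) - (f : HR → X) h) (ENNReal.ofReal p) volume ≤
      s * lpNorm (db (f : HR → X)) (ENNReal.ofReal p) volume := by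
  have hc : Continuous (db (f : HR → X)) := (dbEnd X f).2.1.continuous
  have hd : MemLp (db (f : HR → X)) (ENNReal.ofReal p) volume := testSpace_memLp (dbEnd X f) _
  have hcf := f.2.1.continuous
  have h1 := eLpNorm_flow_sub_le (μ := (volume : Measure HR)) (φ := bmul) (f := f) (g := db (f : HR → X))
    (by unfold bmul Function.uncurry; fun_prop) (fun h => by simp [bmul]) measurePreserving_bmul hc
    (fun h r => hasDerivAt_bmul (testSpace_differentiable f) h r) hp hs
  have h2 := ENNReal.toReal_mono (ENNReal.mul_ne_top ENNReal.ofReal_ne_top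
    hd.eLpNorm_ne_top) h1
  rw [ENNReal.toReal_mul, ENNReal.toReal_ofReal hs, toReal_eLpNorm hc.aestronglyMeasurable,
    toReal_eLpNorm] at h2
  · exact h2
  · refine Continuous.aestronglyMeasurable ?_
    unfold bmul
    fun_prop

theorem lpNorm_sub_vmul_le [CompleteSpace X] {p : ℝ} (hp : 1 ≤ p) (f : testSpace X) {s : ℝ}
    (hs : 0 ≤ s) :
    lpNorm (fun h => (f : HR → X) h - (f : HR → X) (vmul (s * s) h)) (ENNReal.ofReal p) volume ≤
      s * (2 * (lpNorm (da (f : HR → X)) (ENNReal.ofReal p) volume +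
        lpNorm (db (f : HR → X)) (ENNReal.ofReal p) volume)) := by
  set P := ENNReal.ofReal p
  have hP : 1 ≤ P := by simpa [P] using hp
  have hf : MemLp (f : HR → X) P volume := testSpace_memLp f P
  have hA := measurePreserving_amul s
  have hB := measurePreserving_bmul s
  set u : HR → X := fun h => (f : HR → X) (amul s h) - (f : HR → X) h
  set v : HR → X := fun h => (f : HR → X) (bmul s h) - (f : HR → X) h
  set F : HR → X := fun h => (f : HR → X) h - (f : HR → X) (vmul (s * s) h)
  have hu : MemLp u P volume := (hf.comp_measurePreserving hA).sub hf
  have hv : MemLp v P volume := (hf.comp_measurePreserving hB).sub hf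
  have hF : MemLp F P volume := hf.sub (hf.comp_measurePreserving (measurePreserving_vmul _))
  have hFeq : F ∘ (amul s ∘ bmul s) = (u ∘ bmul s + v) - (v ∘ amul s + u) := by
    funext h
    simp only [F, u, v, Function.comp_apply, Pi.sub_apply, Pi.add_apply, vmul_amul_bmul]
    abel
  have huB := hu.comp_measurePreserving hB
  have hvA := hv.comp_measurePreserving hA
  rw [← lpNorm_comp_measurePreserving hF (hA.comp hB), hFeq]
  have h1 := lpNorm_sub_le (g := v ∘ amul s + u) (huB.add hv) hP
  have h2 := lpNorm_add_le (g := v) huB hP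
  have h3 := lpNorm_add_le (g := u) hvA hP
  rw [lpNorm_comp_measurePreserving hu hB] at h2
  rw [lpNorm_comp_measurePreserving hv hA] at h3
  have h4 : lpNorm u P volume ≤ s * lpNorm (da (f : HR → X)) P volume := lpNorm_amul_sub_le hp f hs
  have h5 : lpNorm v P volume ≤ s * lpNorm (db (f : HR → X)) P volume := lpNorm_bmul_sub_le hp f hs
  linarith

end HR

open HR in
theorem exists_dyadic_vertical_sum_le {η q p : ℝ} (hη : η ∈ Set.Ioo (0 : ℝ) 1)
    (hq : 2 ≤ q) (hp : 1 < p) (hpq : p ≤ q) :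
    ∃ C : ℝ, 0 ≤ C ∧ ∀ (X : Type*) [NormedAddCommGroup X] [NormedSpace ℝ X] [CompleteSpace X],
      (∀ ε ∈ Set.Ioo (0 : ℝ) 1, ∀ x y : X, ‖x‖ = 1 → ‖y‖ = 1 → ε ≤ ‖x - y‖ →
        ‖x + y‖ ≤ 2 * (1 - (η * ε) ^ q)) →
      ∀ (f : testSpace X) (s : ℝ), 0 < s → ∀ n : ℕ,
        ∑ k ∈ Finset.range n,
          (lpNorm (fun h => (f : HR → X) (vmul (2 ^ k * s) h) - (f : HR → X) h)
            (ENNReal.ofReal p) volume / √(2 ^ k * s)) ^ q ≤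
        C * (lpNorm (da (f : HR → X)) (ENNReal.ofReal p) volume ^ q +
          lpNorm (db (f : HR → X)) (ENNReal.ofReal p) volume ^ q) := by
  obtain ⟨C, hC0, hC⟩ := exists_dyadic_sum_le (q := q) (K := 2) (by linarith)
    (convexityConst_pos (q := q) hη.1 hp) (by norm_num)
  refine ⟨C, hC0, fun X _ _ _ hX f s hs n => ?_⟩
  have hP : 1 ≤ ENNReal.ofReal p := by simpa using hp.le
  have hw : ∀ k : ℕ, √s * √2 ^ k = √(2 ^ k * s) := fun k => by
    rw [mul_comm, Real.sqrt_mul (by positivity), Real.sqrt_eq_rpow 2, Real.sqrt_eq_rpow (2 ^ k),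
      ← Real.rpow_natCast, ← Real.rpow_natCast, ← Real.rpow_mul (by norm_num),
      ← Real.rpow_mul (by norm_num), mul_comm (1 / 2 : ℝ)]
  have key := hC (lpSeminorm X (ENNReal.ofReal p) hP) (vmulEnd X s) (daEnd X) (dbEnd X) (√s)
    (Real.sqrt_pos.2 hs)
    (fun x => lpNorm_comp_measurePreserving (testSpace_memLp x _) (measurePreserving_vmul s))
    (commute_daEnd s) (commute_dbEnd s)
    (fun x y hxy => lpNorm_two_point hη hq hp hpq hX (testSpace_memLp x _) (testSpace_memLp y _)
      hxy)
    (fun k x => by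
      rw [hw, vmulEnd_pow]
      have := lpNorm_sub_vmul_le hp.le x (Real.sqrt_nonneg (2 ^ k * s))
      rw [Real.mul_self_sqrt (by positivity)] at this
      push_cast
      exact this)
    f n
  refine le_trans (le_of_eq (Finset.sum_congr rfl fun k _ => ?_)) key
  rw [hw, vmulEnd_pow]
  congr 2
  rw [← map_sub_rev]
  push_cast
  rfl

open HR in
/-- Theorem 2.1 (Real vertical versus horizontal Poincaré inequality). -/
theorem real_vertical_vs_horizontal_poincare (η : ℝ) (hη : η ∈ Set.Ioo (0 : ℝ) 1)
    (q p : ℝ) (hq : 2 ≤ q) (hp : 1 < p) (hpq : p ≤ q) :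
    ∃ C : ℝ, 0 < C ∧
      ∀ (X : Type) [NormedAddCommGroup X] [NormedSpace ℝ X] [CompleteSpace X],
        (∀ ε ∈ Set.Ioo (0 : ℝ) 1, ∀ x y : X, ‖x‖ = 1 → ‖y‖ = 1 → ε ≤ ‖x - y‖ →
          ‖x + y‖ ≤ 2 * (1 - (η * ε) ^ q)) →
        ∀ f : HR → X, ContDiff ℝ (⊤ : ℕ∞) f → HasCompactSupport f →
          (∫⁻ t in Set.Ioi (0 : ℝ),
              ENNReal.ofReal
                ((∫ h : HR, ‖f (vmul t h) - f h‖ ^ p) ^ (q / p) / t ^ (1 + q / 2))) ^ (1 / q) ≤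
            ENNReal.ofReal
              (C * (∫ h : HR, (‖da f h‖ ^ p + ‖db f h‖ ^ p)) ^ (1 / p)) := by
  obtain ⟨C, hC0, hC⟩ := exists_dyadic_vertical_sum_le hη hq hp hpq
  have hp0 : 0 < p := by linarith
  have hq0 : 0 < q := by linarith
  refine ⟨(2 * C + 1) ^ (1 / q), by positivity, fun X _ _ _ hX f hf hfc => ?_⟩
  let g : testSpace X := ⟨f, hf, hfc⟩
  set I := ∫ h : HR, (‖da f h‖ ^ p + ‖db f h‖ ^ p) with hI
  have hI0 : 0 ≤ I := integral_nonneg fun h => by positivity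
  have hint : ∀ u : testSpace X, Integrable (fun h => ‖(u : HR → X) h‖ ^ p) := fun u => by
    simpa [ENNReal.toReal_ofReal hp0.le] using
      (testSpace_memLp u (ENNReal.ofReal p)).integrable_norm_rpow
        (by simpa using hp0) ENNReal.ofReal_ne_top
  have hIadd : I = (∫ h, ‖da f h‖ ^ p) + ∫ h, ‖db f h‖ ^ p :=
    integral_add (hint (daEnd X g)) (hint (dbEnd X g))
  have ha0 : 0 ≤ ∫ h, ‖da f h‖ ^ p := integral_nonneg fun h => by positivity
  have hb0 : 0 ≤ ∫ h, ‖db f h‖ ^ p := integral_nonneg fun h => by positivity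
  have hqp : 0 ≤ q / p := by positivity
  have hA : lpNorm (da f) (ENNReal.ofReal p) volume ^ q ≤ I ^ (q / p) := by
    have hd : MemLp (da f) (ENNReal.ofReal p) volume := testSpace_memLp (daEnd X g) _
    rw [lpNorm_ofReal_rpow hp0 hd.1]
    exact Real.rpow_le_rpow ha0 (by linarith) hqp
  have hB : lpNorm (db f) (ENNReal.ofReal p) volume ^ q ≤ I ^ (q / p) := by
    have hd : MemLp (db f) (ENNReal.ofReal p) volume := testSpace_memLp (dbEnd X g) _
    rw [lpNorm_ofReal_rpow hp0 hd.1]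
    exact Real.rpow_le_rpow hb0 (by linarith) hqp
  have hIq : 0 ≤ I ^ (q / p) := Real.rpow_nonneg hI0 _
  have hR : (2 * C + 1) ^ (1 / q) * I ^ (1 / p) = ((2 * C + 1) * I ^ (q / p)) ^ (1 / q) := by
    rw [Real.mul_rpow (by positivity) hIq, ← Real.rpow_mul hI0]
    congr 2
    field_simp
  rw [hR, ← ENNReal.ofReal_rpow_of_nonneg (by positivity) (by positivity)]
  refine ENNReal.rpow_le_rpow ?_ (by positivity)
  refine lintegral_Ioi_le_of_dyadic_sum_le fun s hs n => ?_
  have hterm : ∀ k : ℕ, (2 : ℝ) ^ k * ((∫ h : HR, ‖f (vmul (2 ^ k * s) h) - f h‖ ^ p) ^ (q / p) /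
      (2 ^ k * s) ^ (1 + q / 2)) = 1 / s *
      (lpNorm (fun h => f (vmul (2 ^ k * s) h) - f h) (ENNReal.ofReal p) volume /
        √(2 ^ k * s)) ^ q := by
    intro k
    have hts : 0 < 2 ^ k * s := by positivity
    have hd : MemLp (fun h => f (vmul (2 ^ k * s) h) - f h) (ENNReal.ofReal p) volume :=
      testSpace_memLp (vmulEnd X (2 ^ k * s) g - g) _
    rw [Real.div_rpow lpNorm_nonneg (Real.sqrt_nonneg _), Real.sqrt_eq_rpow,
      ← Real.rpow_mul hts.le, Real.rpow_add hts, Real.rpow_one, lpNorm_ofReal_rpow hp0 hd.1,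
      one_div_mul_eq_div 2 q]
    have : (2 ^ k * s) ^ (q / 2) ≠ 0 := by positivity
    field_simp
  have hnn : ∀ k ∈ Finset.range n, 0 ≤ 1 / s *
      (lpNorm (fun h => f (vmul (2 ^ k * s) h) - f h) (ENNReal.ofReal p) volume /
        √(2 ^ k * s)) ^ q := fun k _ =>
    mul_nonneg (by positivity) (Real.rpow_nonneg (div_nonneg lpNorm_nonneg (Real.sqrt_nonneg _)) _)
  simp_rw [← ENNReal.ofReal_mul (pow_nonneg (zero_le_two (α := ℝ)) _), hterm]
  rw [← ENNReal.ofReal_sum_of_nonneg hnn, ← ENNReal.ofReal_mul (by positivity), ← Finset.mul_sum]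
  refine ENNReal.ofReal_le_ofReal (mul_le_mul_of_nonneg_left ?_ (by positivity))
  refine (hC X hX g s hs n).trans ?_
  have := mul_le_mul_of_nonneg_left (add_le_add hA hB) hC0
  change C * (lpNorm (da f) (ENNReal.ofReal p) volume ^ q +
    lpNorm (db f) (ENNReal.ofReal p) volume ^ q) ≤ _
  linarith
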